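/- (Growth lemma for the Moser recursion) Let κ ∈ (1,2] and γ > 0, and let (I_ν)_{ν≥0} be a sequence of nonnegative reals satisfying I_{ν+1} ≤ 4·64^ν γ (1 + I_ν^κ) for all ν ∈ ℕ. Set L = 4γ + 64 and define b₀ = 0, b_{ν+1} = κ b_ν + 2κ + ν. Then I_ν ≤ L^{b_ν} (1 + I₀^{κ^ν}) for all ν ∈ ℕ. -/

import Mathlib

open Set

/-!
If `I_ν ≤ A (1 + z)` with `A = L ^ b_ν ≥ 1` and `z = I₀ ^ κ ^ ν`, then convexity of `t ↦ t ^ κ`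
gives `1 + I_ν ^ κ ≤ 2 ^ κ * A ^ κ * (1 + z ^ κ)`, where `z ^ κ = I₀ ^ κ ^ (ν + 1)`. The factor
`A ^ κ` accounts for the term `κ b_ν` of `b_{ν+1}`, while `2κ + ν` absorbs `2 ^ κ` and the
coefficient `C * M ^ ν` of the recursion: `C * M ^ ν * 2 ^ κ ≤ L ^ (1 + ν + κ) ≤ L ^ (2κ + ν)` as
soon as `L ≥ max C M 2`.
-/

theorem add_rpow_le_two_rpow_mul_rpow_add_rpow {p x y : ℝ} (hp : 1 ≤ p) (hx : 0 ≤ x)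
    (hy : 0 ≤ y) : (x + y) ^ p ≤ 2 ^ (p - 1) * (x ^ p + y ^ p) := by
  lift x to NNReal using hx
  lift y to NNReal using hy
  exact_mod_cast NNReal.rpow_add_le_mul_rpow_add_rpow x y hp

theorem one_add_rpow_le_of_le_mul_one_add {κ A x z : ℝ} (hκ : 1 ≤ κ) (hA : 1 ≤ A) (hx : 0 ≤ x)
    (hz : 0 ≤ z) (hxz : x ≤ A * (1 + z)) :
    1 + x ^ κ ≤ 2 ^ κ * A ^ κ * (1 + z ^ κ) := by
  have one_le : 1 ≤ A ^ κ * (2 ^ (κ - 1) * (1 + z ^ κ)) :=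
    one_le_mul_of_one_le_of_one_le (Real.one_le_rpow hA (by linarith)) <|
      one_le_mul_of_one_le_of_one_le (Real.one_le_rpow one_le_two (by linarith)) <|
        le_add_of_nonneg_right (Real.rpow_nonneg hz κ)
  have rpow_le : x ^ κ ≤ A ^ κ * (2 ^ (κ - 1) * (1 + z ^ κ)) := calc
    x ^ κ ≤ (A * (1 + z)) ^ κ := by gcongr
    _ = A ^ κ * (1 + z) ^ κ := Real.mul_rpow (by linarith) (by linarith)
    _ ≤ A ^ κ * (2 ^ (κ - 1) * (1 + z ^ κ)) := by
      gcongr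
      simpa only [Real.one_rpow] using add_rpow_le_two_rpow_mul_rpow_add_rpow hκ zero_le_one hz
  calc
    1 + x ^ κ ≤ 2 * (A ^ κ * (2 ^ (κ - 1) * (1 + z ^ κ))) := by linarith
    _ = 2 ^ κ * A ^ κ * (1 + z ^ κ) := by
      rw [Real.rpow_sub_one two_ne_zero]
      ring

theorem mul_pow_mul_two_rpow_le_rpow {κ C M L : ℝ} (hκ : 1 ≤ κ) (hM : 0 ≤ M) (hCL : C ≤ L)
    (hML : M ≤ L) (hL : 2 ≤ L) (ν : ℕ) :
    C * M ^ ν * 2 ^ κ ≤ L ^ (2 * κ + ν) := by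
  have hL0 : 0 < L := by linarith
  calc
    C * M ^ ν * 2 ^ κ ≤ L * L ^ ν * L ^ κ := by gcongr
    _ = L ^ (1 + ν + κ) := by
      rw [Real.rpow_add hL0, Real.rpow_add hL0, Real.rpow_one, Real.rpow_natCast]
    _ ≤ L ^ (2 * κ + ν) := Real.rpow_le_rpow_of_exponent_le (by linarith) (by linarith)

theorem nonneg_of_affine_recurrence {κ : ℝ} {b c : ℕ → ℝ} (hκ : 0 ≤ κ) (hc : ∀ ν, 0 ≤ c ν)
    (hb0 : 0 ≤ b 0) (hb : ∀ ν, b (ν + 1) = κ * b ν + c ν) (ν : ℕ) : 0 ≤ b ν := by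
  induction ν with
  | zero => exact hb0
  | succ ν ih =>
    rw [hb]
    exact add_nonneg (mul_nonneg hκ ih) (hc ν)

theorem moser_recursion_growth_lemma_general {κ C M L : ℝ} {I b : ℕ → ℝ} (hκ : 1 ≤ κ)
    (hC : 0 ≤ C) (hM : 0 ≤ M) (hCL : C ≤ L) (hML : M ≤ L) (hL : 2 ≤ L) (hI : ∀ ν, 0 ≤ I ν)
    (hrec : ∀ ν, I (ν + 1) ≤ C * M ^ ν * (1 + I ν ^ κ))
    (hb0 : b 0 = 0) (hb : ∀ ν : ℕ, b (ν + 1) = κ * b ν + 2 * κ + ν) (ν : ℕ) :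
    I ν ≤ L ^ b ν * (1 + I 0 ^ (κ ^ ν)) := by
  have hL0 : 0 < L := by linarith
  have b_nonneg : ∀ ν, 0 ≤ b ν :=
    nonneg_of_affine_recurrence (c := fun ν ↦ 2 * κ + ν) (by linarith) (fun ν ↦ by positivity)
      hb0.ge (fun ν ↦ (hb ν).trans (add_assoc _ _ _))
  induction ν with
  | zero => simp [hb0]
  | succ ν ih =>
    have one_add_le : 1 + I ν ^ κ ≤ 2 ^ κ * L ^ (κ * b ν) * (1 + I 0 ^ κ ^ (ν + 1)) := by
      rw [mul_comm κ, pow_succ, Real.rpow_mul hL0.le, Real.rpow_mul (hI 0)]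
      exact one_add_rpow_le_of_le_mul_one_add hκ
        (Real.one_le_rpow (by linarith) (b_nonneg ν)) (hI ν) (Real.rpow_nonneg (hI 0) _) ih
    have z_nonneg : 0 ≤ I 0 ^ κ ^ (ν + 1) := Real.rpow_nonneg (hI 0) _
    calc
      I (ν + 1) ≤ C * M ^ ν * (1 + I ν ^ κ) := hrec ν
      _ ≤ C * M ^ ν * (2 ^ κ * L ^ (κ * b ν) * (1 + I 0 ^ κ ^ (ν + 1))) := by gcongr
      _ = C * M ^ ν * 2 ^ κ * L ^ (κ * b ν) * (1 + I 0 ^ κ ^ (ν + 1)) := by ring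
      _ ≤ L ^ (2 * κ + ν) * L ^ (κ * b ν) * (1 + I 0 ^ κ ^ (ν + 1)) := by
        gcongr
        exact mul_pow_mul_two_rpow_le_rpow hκ hM hCL hML hL ν
      _ = L ^ b (ν + 1) * (1 + I 0 ^ κ ^ (ν + 1)) := by
        rw [← Real.rpow_add hL0, hb, add_comm, add_assoc]

/-- **Growth lemma for the Moser recursion.** Let `κ ∈ (1,2]`, `γ > 0`, and let `(I_ν)` be a
sequence of nonnegative reals with `I_{ν+1} ≤ 4·64^ν γ (1 + I_ν^κ)`. With `L = 4γ + 64` and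
`b₀ = 0`, `b_{ν+1} = κb_ν + 2κ + ν`, one has `I_ν ≤ L^{b_ν} (1 + I₀^{κ^ν})` for all `ν`. -/
theorem moser_recursion_growth_lemma
    (κ : ℝ) (hκ : κ ∈ Ioc (1:ℝ) 2) (γ : ℝ) (hγ : 0 < γ)
    (I : ℕ → ℝ) (hI : ∀ ν : ℕ, 0 ≤ I ν)
    (hrec : ∀ ν : ℕ, I (ν + 1) ≤ 4 * 64 ^ ν * γ * (1 + I ν ^ κ))
    (L : ℝ) (hL : L = 4 * γ + 64)
    (b : ℕ → ℝ) (hb0 : b 0 = 0) (hb : ∀ ν : ℕ, b (ν + 1) = κ * b ν + 2 * κ + ν) :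
    ∀ ν : ℕ, I ν ≤ L ^ b ν * (1 + I 0 ^ (κ ^ ν)) :=
  moser_recursion_growth_lemma_general (C := 4 * γ) (M := 64) hκ.1.le (by positivity) (by norm_num)
    (by linarith) (by linarith) (by linarith) hI (fun ν ↦ (hrec ν).trans_eq (by ring)) hb0 hb
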